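/- Generalized Chebyshev's inequality for tensors: Let A be a deterministic positive definite d×d complex matrix, let X be a random Hermitian d×d matrix such that |X|^p has integrable entries, and let p ≥ 1. Then ℙ(X ⋠ A) ≤ Tr(𝔼[|X|^p]·A^{−p}). -/

import Mathlib

open MeasureTheory
open scoped ComplexOrder

noncomputable section

/-- `d × d` complex matrices: the model for square tensors
`ℂ^{I_1×⋯×I_N×I_1×⋯×I_N}` under the Einstein product, with `d = ∏ I_j`. -/
abbrev Mat (d : ℕ) := Matrix (Fin d) (Fin d) ℂ

/-- Continuous functional calculus: apply `f : ℝ → ℝ` to the eigenvalues of a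
(Hermitian) matrix. -/
noncomputable def mfun {d : ℕ} (f : ℝ → ℝ) (A : Mat d) : Mat d := cfc f A

/-- Real matrix power `A^r` via the continuous functional calculus. -/
noncomputable def mpow {d : ℕ} (A : Mat d) (r : ℝ) : Mat d :=
  cfc (fun x : ℝ => x ^ r) A

/-- The positive semidefinite absolute value `|A| = (A²)^{1/2}` of a Hermitian
matrix, obtained by applying `|·|` to the eigenvalues. -/
noncomputable def matAbs {d : ℕ} (A : Mat d) : Mat d := mfun (fun x => |x|) A

/-- Largest eigenvalue of a Hermitian matrix (junk value `0` otherwise). -/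
noncomputable def eigMax {d : ℕ} (A : Mat d) : ℝ :=
  if h : A.IsHermitian then ⨆ i, h.eigenvalues i else 0

/-- Smallest eigenvalue of a Hermitian matrix (junk value `0` otherwise). -/
noncomputable def eigMin {d : ℕ} (A : Mat d) : ℝ :=
  if h : A.IsHermitian then ⨅ i, h.eigenvalues i else 0

/-- The `i`-th largest eigenvalue (`0`-indexed, so `eigDesc A 0 = λ₁(A)` is the
largest) of a Hermitian matrix; junk value `0` otherwise. -/
noncomputable def eigDesc {d : ℕ} (A : Mat d) (i : ℕ) : ℝ :=
  if h : i < d ∧ A.IsHermitian then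
    (h.2.eigenvalues ∘ Tuple.sort h.2.eigenvalues) (Fin.rev ⟨i, h.1⟩) else 0

/-- Operator perspective `X #_f Y = X^{1/2} · f(X^{-1/2} Y X^{-1/2}) · X^{1/2}`. -/
noncomputable def persp {d : ℕ} (f : ℝ → ℝ) (X Y : Mat d) : Mat d :=
  mpow X (1/2) * mfun f (mpow X (-(1/2)) * Y * mpow X (-(1/2))) * mpow X (1/2)

/-- `TMI¹` : positive continuous functions on `(0,∞)` with `f 1 = 1` that are
tensor (matrix, in dimension `d`) monotone increasing. -/
def TMI1 (d : ℕ) (f : ℝ → ℝ) : Prop :=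
  ContinuousOn f (Set.Ioi 0) ∧ (∀ x > 0, 0 < f x) ∧ f 1 = 1 ∧
    ∀ A B : Mat d, A.PosDef → B.PosDef → (A - B).PosSemidef →
      (mfun f A - mfun f B).PosSemidef

/-- `TMD¹` : positive continuous functions on `(0,∞)` with `h 1 = 1` that are
tensor (matrix, in dimension `d`) monotone decreasing. -/
def TMD1 (d : ℕ) (h : ℝ → ℝ) : Prop :=
  ContinuousOn h (Set.Ioi 0) ∧ (∀ x > 0, 0 < h x) ∧ h 1 = 1 ∧
    ∀ A B : Mat d, A.PosDef → B.PosDef → (A - B).PosSemidef →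
      (mfun h B - mfun h A).PosSemidef

/-- `TC¹` : positive continuous functions on `(0,∞)` with `g 1 = 1` that are
tensor (matrix, in dimension `d`) convex. -/
def TC1 (d : ℕ) (g : ℝ → ℝ) : Prop :=
  ContinuousOn g (Set.Ioi 0) ∧ (∀ x > 0, 0 < g x) ∧ g 1 = 1 ∧
    ∀ A B : Mat d, A.PosDef → B.PosDef → ∀ t : ℝ, 0 ≤ t → t ≤ 1 →
      ((t • mfun g A + (1 - t) • mfun g B) - mfun g (t • A + (1 - t) • B)).PosSemidef

/-- `Z_j := X^{-2^{j-1}} · Y^{2^j} · X^{-2^{j-1}}` (so `Z_0 = X^{-1/2} Y X^{-1/2}`);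
this is `Z_{k-1}` of the paper for `k = j+1`. -/
noncomputable def Zmat {d : ℕ} (X Y : Mat d) (j : ℕ) : Mat d :=
  mpow X (-((2 : ℝ) ^ ((j : ℝ) - 1))) * mpow Y ((2 : ℝ) ^ (j : ℝ)) *
    mpow X (-((2 : ℝ) ^ ((j : ℝ) - 1)))

/-- `Ψ_lower(q,f,X,Y)` for `q = 2ⁿ·q₀`. -/
noncomputable def PsiLower {d : ℕ} (q0 : ℝ) (n : ℕ) (f : ℝ → ℝ) (X Y : Mat d) : ℝ :=
  eigMin (mpow (mfun f (Zmat X Y n)) (-q0) * mfun f (mpow (Zmat X Y n) q0)) *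
    ∏ k ∈ Finset.range n,
      eigMin (mpow (mfun f (Zmat X Y k)) (-2) * mfun f (mpow (Zmat X Y k) 2))

/-- `Ψ_upper(q,f,X,Y)` for `q = 2ⁿ·q₀`. -/
noncomputable def PsiUpper {d : ℕ} (q0 : ℝ) (n : ℕ) (f : ℝ → ℝ) (X Y : Mat d) : ℝ :=
  eigMax (mpow (mfun f (Zmat X Y n)) (-q0) * mfun f (mpow (Zmat X Y n) q0)) *
    ∏ k ∈ Finset.range n,
      eigMax (mpow (mfun f (Zmat X Y k)) (-2) * mfun f (mpow (Zmat X Y k) 2))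

/-- The Kantorovich constant `K(m, M, p)`. -/
noncomputable def Kconst (m M p : ℝ) : ℝ :=
  ((p - 1) * (M ^ p - m ^ p) / (p * (m * M ^ p - M * m ^ p))) ^ p *
    (m * M ^ p - M * m ^ p) / ((p - 1) * (M - m))

/-- The Kantorovich constant, interpreted as `1` when `p = 1` or `m = M`. -/
noncomputable def Kc (m M p : ℝ) : ℝ := if p = 1 ∨ m = M then 1 else Kconst m M p

/-- `ψ(q, f, Z) = max( f(λ_min(Z)^q)/f(λ_min(Z))^q , f(λ_max(Z)^q)/f(λ_max(Z))^q )`. -/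
noncomputable def psiRatio {d : ℕ} (q : ℝ) (f : ℝ → ℝ) (Z : Mat d) : ℝ :=
  max (f (eigMin Z ^ q) / f (eigMin Z) ^ q) (f (eigMax Z ^ q) / f (eigMax Z) ^ q)

/-- Entrywise expectation of a random matrix. -/
noncomputable def Emat {d : ℕ} {Ω : Type*} [MeasurableSpace Ω] (μ : Measure Ω)
    (X : Ω → Mat d) : Mat d := fun i j => ∫ ω, X ω i j ∂μ

open scoped MatrixOrder Matrix.Norms.L2Operator in
lemma cheb_pointwise {d : ℕ} (A : Mat d) (hA : A.PosDef) (X : Mat d) (hX : X.IsHermitian)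
    (p : ℝ) (hp : 1 ≤ p)
    (h : (Matrix.trace (mpow (matAbs X) p * mpow A (-p))).re < 1) : (A - X).PosSemidef := by
  have hp0 : 0 < p := by linarith
  have hXs : IsSelfAdjoint X := hX
  have hA0 : (0 : Mat d) ≤ A := hA.posSemidef.nonneg
  have hAu : IsStrictlyPositive A := hA.isStrictlyPositive
  have hY0 : 0 ≤ matAbs X := by
    unfold matAbs mfun
    exact cfc_nonneg (fun x _ => abs_nonneg x)
  have hXY : X ≤ matAbs X := by
    unfold matAbs mfun
    conv_lhs => rw [← cfc_id ℝ X]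
    exact cfc_mono (fun x _ => le_abs_self x) (by fun_prop) (by fun_prop)
  have e1 : mpow (matAbs X) p = (matAbs X) ^ p := by
    unfold mpow
    rw [CFC.rpow_eq_cfc_real hY0]
  have e2 : mpow A (-p) = A ^ (-p) := by
    unfold mpow
    rw [CFC.rpow_eq_cfc_real hA0]
  rw [e1, e2] at h
  set Y := matAbs X with hY
  have e3 : A ^ (-p) = A ^ (-p/2) * A ^ (-p/2) := by
    rw [← CFC.rpow_add hAu.isUnit]; congr 1; ring
  have hD : IsSelfAdjoint (A ^ (-p/2)) := IsSelfAdjoint.of_nonneg CFC.rpow_nonneg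
  have hE : IsSelfAdjoint (A ^ (p/2)) := IsSelfAdjoint.of_nonneg CFC.rpow_nonneg
  set M := A ^ (-p/2) * Y ^ p * A ^ (-p/2) with hM
  have hM0 : 0 ≤ M := hD.conjugate_nonneg CFC.rpow_nonneg
  have hMt : (Matrix.trace M).re < 1 := by
    rw [hM, mul_assoc, Matrix.trace_mul_comm, mul_assoc, ← e3]; exact h
  have hMp : M.PosSemidef := Matrix.nonneg_iff_posSemidef.mp hM0
  have hM1 : M ≤ 1 := by
    have := le_algebraMap_of_spectrum_le (R := ℝ) (a := M) (r := 1) (by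
      intro x hx
      rw [hMp.1.spectrum_real_eq_range_eigenvalues] at hx
      obtain ⟨i, rfl⟩ := hx
      have ht := hMp.1.trace_eq_sum_eigenvalues
      rw [ht, Complex.re_sum] at hMt
      have := Finset.single_le_sum (f := hMp.1.eigenvalues)
        (fun j _ => hMp.eigenvalues_nonneg j) (Finset.mem_univ i)
      have h2 : (∑ i, hMp.1.eigenvalues i) < 1 := hMt
      linarith) hMp.1
    simpa using this
  have f1 : A ^ (p/2) * A ^ (-p/2) = 1 := by
    rw [← CFC.rpow_add hAu.isUnit, ← CFC.rpow_zero A hA0]; congr 1; ring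
  have f2 : A ^ (-p/2) * A ^ (p/2) = 1 := by
    rw [← CFC.rpow_add hAu.isUnit, ← CFC.rpow_zero A hA0]; congr 1; ring
  have f3 : A ^ (p/2) * A ^ (p/2) = A ^ p := by
    rw [← CFC.rpow_add hAu.isUnit]; congr 1; ring
  have hle : Y ^ p ≤ A ^ p := by
    have := hE.conjugate_le_conjugate hM1
    have g : A ^ (p/2) * M * A ^ (p/2) = Y ^ p := by
      calc A ^ (p/2) * M * A ^ (p/2)
          = (A ^ (p/2) * A ^ (-p/2)) * Y ^ p * (A ^ (-p/2) * A ^ (p/2)) := by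
            rw [hM]; simp only [mul_assoc]
        _ = Y ^ p := by rw [f1, f2, one_mul, mul_one]
    rwa [g, mul_one, f3] at this
  have hle2 : (Y ^ p) ^ (1/p) ≤ (A ^ p) ^ (1/p) :=
    CFC.rpow_le_rpow ⟨by positivity, by rw [div_le_one hp0]; exact hp⟩ hle
  have r : ∀ B : Mat d, 0 ≤ B → (B ^ p) ^ (1/p) = B := by
    intro B hB
    rw [CFC.rpow_rpow_of_exponent_nonneg B p (1/p) hp0.le (by positivity) hB,
      mul_one_div_cancel hp0.ne', CFC.rpow_one B hB]
  rw [r Y hY0, r A hA0] at hle2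
  exact Matrix.le_iff.mp (hXY.trans hle2)

open scoped MatrixOrder Matrix.Norms.L2Operator in
lemma cheb_nonneg {d : ℕ} (A : Mat d) (hA : A.PosDef) (X : Mat d) (p : ℝ) :
    0 ≤ (Matrix.trace (mpow (matAbs X) p * mpow A (-p))).re := by
  have hA0 : (0 : Mat d) ≤ A := hA.posSemidef.nonneg
  have hAu : IsStrictlyPositive A := hA.isStrictlyPositive
  have hY0 : 0 ≤ matAbs X := by
    unfold matAbs mfun
    exact cfc_nonneg (fun x _ => abs_nonneg x)
  have e1 : mpow (matAbs X) p = (matAbs X) ^ p := by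
    unfold mpow
    rw [CFC.rpow_eq_cfc_real hY0]
  have e2 : mpow A (-p) = A ^ (-p) := by
    unfold mpow
    rw [CFC.rpow_eq_cfc_real hA0]
  have e3 : A ^ (-p) = A ^ (-p/2) * A ^ (-p/2) := by
    rw [← CFC.rpow_add hAu.isUnit]; congr 1; ring
  have hD : IsSelfAdjoint (A ^ (-p/2)) := IsSelfAdjoint.of_nonneg CFC.rpow_nonneg
  have hM0 : 0 ≤ A ^ (-p/2) * (matAbs X) ^ p * A ^ (-p/2) :=
    hD.conjugate_nonneg CFC.rpow_nonneg
  have ht := (Matrix.nonneg_iff_posSemidef.mp hM0).trace_nonneg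
  rw [mul_assoc, Matrix.trace_mul_comm, mul_assoc, ← e3] at ht
  rw [e1, e2]
  exact (Complex.le_def.mp ht).1

/-- **Generalized Chebyshev's inequality for tensors** (Theorem 3.5). For a
deterministic PD matrix `A`, a random Hermitian matrix `X` with `|X|^p` having
integrable entries, and `p ≥ 1`: `ℙ(X ⋠ A) ≤ Tr(𝔼[|X|^p]·A^{-p})`. -/
theorem generalized_chebyshev_inequality_for_tensors {d : ℕ} (hd : 1 ≤ d)
    {Ω : Type*} [MeasurableSpace Ω] (μ : Measure Ω) [IsProbabilityMeasure μ]
    (A : Mat d) (hA : A.PosDef) (X : Ω → Mat d)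
    (p : ℝ) (hp : 1 ≤ p)
    (hherm : ∀ᵐ ω ∂μ, (X ω).IsHermitian)
    (hint : ∀ i j, Integrable (fun ω => mpow (matAbs (X ω)) p i j) μ) :
    (μ {ω | ¬ (A - X ω).PosSemidef}).toReal ≤
      (Matrix.trace (Emat μ (fun ω => mpow (matAbs (X ω)) p) * mpow A (-p))).re := by
  have hg : Integrable (fun ω => (Matrix.trace (mpow (matAbs (X ω)) p * mpow A (-p))).re) μ := by
    have : Integrable (fun ω => Matrix.trace (mpow (matAbs (X ω)) p * mpow A (-p))) μ := by
      simp only [Matrix.trace, Matrix.diag, Matrix.mul_apply]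
      exact integrable_finsetSum _ fun i _ => integrable_finsetSum _ fun j _ =>
        (hint i j).mul_const _
    exact this.re
  have he : (Matrix.trace (Emat μ (fun ω => mpow (matAbs (X ω)) p) * mpow A (-p))).re
      = ∫ ω, (Matrix.trace (mpow (matAbs (X ω)) p * mpow A (-p))).re ∂μ := by
    have h1 : Integrable (fun ω => Matrix.trace (mpow (matAbs (X ω)) p * mpow A (-p))) μ := by
      simp only [Matrix.trace, Matrix.diag, Matrix.mul_apply]
      exact integrable_finsetSum _ fun i _ => integrable_finsetSum _ fun j _ =>
        (hint i j).mul_const _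
    have h2 := integral_re h1
    refine Eq.trans ?_ h2.symm
    change _ = Complex.re _
    congr 1
    simp only [Matrix.trace, Matrix.diag, Matrix.mul_apply, Emat]
    rw [integral_finsetSum _ fun i _ => integrable_finsetSum _ fun j _ =>
        (hint i j).mul_const _]
    refine Finset.sum_congr rfl fun i _ => ?_
    rw [integral_finsetSum _ fun j _ => (hint i j).mul_const _]
    exact Finset.sum_congr rfl fun j _ => (integral_mul_const _ _).symm
  rw [he]
  have hnn : 0 ≤ᵐ[μ] fun ω => (Matrix.trace (mpow (matAbs (X ω)) p * mpow A (-p))).re :=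
    Filter.Eventually.of_forall fun ω => cheb_nonneg A hA (X ω) p
  have hmk := mul_meas_ge_le_integral_of_nonneg hnn hg 1
  rw [one_mul] at hmk
  refine le_trans ?_ hmk
  refine ENNReal.toReal_mono (measure_ne_top _ _) (measure_mono_ae ?_)
  filter_upwards [hherm] with ω hω hbad
  by_contra hlt
  exact hbad (cheb_pointwise A hA (X ω) hω p hp (not_le.mp hlt))
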